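/- arXiv:2107.05099 — 2 statements merged into one kernel-verified Lean document; each statement's English description precedes it below -/
import Mathlib

section
/- If t ≥ m + n, then the dimension over k of the space of S_t-equivariant k-linear maps from U_t^{⊗n} to U_t^{⊗m} (maps commuting with the diagonal S_t-action) equals the number of set partitions of a set with m + n elements (the (m+n)-th Bell number). (Consequence of Theorem 4.1: Hom_{Par_t}(n, m) ≅ Hom_{kS_t}(U_t^{⊗n}, U_t^{⊗m}) for t ≥ m + n, and dim Hom_{Par_t}(n, m) is the (m+n)-th Bell number.) -/
/-!
An equivariant map is determined by its matrix `(J, I) ↦ f u_I J`, and equivariance says exactly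
that this matrix is invariant under the simultaneous substitution `(J, I) ↦ (σ ∘ J, σ ∘ I)`
(`equivariant_iff`).  Gluing `J` and `I` to one function `Fin (m + n) → Fin t`, an invariant matrix
is a function on the `S_t`-orbits of such functions.  Two functions lie in the same orbit precisely
when they have the same kernel (`exists_perm_comp_eq`), and since `m + n ≤ t` every equivalence
relation on `Fin (m + n)` occurs as a kernel (`exists_ker_eq`).  So the equivariant maps are
linearly equivalent to the `k`-valued functions on `Setoid (Fin (m + n))` (`equivariantEquiv`).
-/


open scoped Classical

noncomputable section

/-- The diagonal action of `σ ∈ S_t` on `U_t^{⊗n}`:  `σ · u_I = u_{σ ∘ I}`. -/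
def diagAct (k : Type*) [Field k] (t n : ℕ) (σ : Equiv.Perm (Fin t)) :
    ((Fin n → Fin t) → k) →ₗ[k] ((Fin n → Fin t) → k) :=
  Matrix.mulVecLin (Matrix.of fun (J I : Fin n → Fin t) =>
    if (fun p => σ (I p)) = J then (1 : k) else 0)

/-- The space of `S_t`-equivariant `k`-linear maps `U_t^{⊗n} → U_t^{⊗m}`. -/
def equivariantMaps (k : Type*) [Field k] (t m n : ℕ) :
    Submodule k (((Fin n → Fin t) → k) →ₗ[k] ((Fin m → Fin t) → k)) where
  carrier := {f | ∀ (σ : Equiv.Perm (Fin t)) (v : (Fin n → Fin t) → k),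
    f (diagAct k t n σ v) = diagAct k t m σ (f v)}
  add_mem' := by
    intro f g hf hg σ v
    simp only [LinearMap.add_apply, hf σ v, hg σ v, map_add]
  zero_mem' := by
    intro σ v
    simp only [LinearMap.zero_apply, map_zero]
  smul_mem' := by
    intro c f hf σ v
    simp only [LinearMap.smul_apply, hf σ v, map_smul]

lemma diagAct_apply (k : Type*) [Field k] (t n : ℕ) (σ : Equiv.Perm (Fin t))
    (v : (Fin n → Fin t) → k) (J : Fin n → Fin t) :
    diagAct k t n σ v J = v (fun p => σ.symm (J p)) := by
  have h : ∀ I : Fin n → Fin t,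
      (fun p => σ (I p)) = J ↔ I = fun p => σ.symm (J p) := by
    intro I
    simp only [funext_iff, Equiv.eq_symm_apply]
  simp [diagAct, Matrix.mulVec, dotProduct, h]

lemma diagAct_single (k : Type*) [Field k] (t n : ℕ) (σ : Equiv.Perm (Fin t))
    (I : Fin n → Fin t) :
    diagAct k t n σ (Pi.single I 1) = Pi.single (fun p => σ (I p)) 1 := by
  ext J
  rw [diagAct_apply]
  have h : (fun p => σ.symm (J p)) = I ↔ J = fun p => σ (I p) := by
    simp only [funext_iff, Equiv.symm_apply_eq]
  simp only [Pi.single_apply, h]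

/-- A linear map is equivariant iff its matrix is invariant under permuting the values of the row
and column indices simultaneously. -/
lemma equivariant_iff (k : Type*) [Field k] (t m n : ℕ)
    (f : ((Fin n → Fin t) → k) →ₗ[k] ((Fin m → Fin t) → k)) :
    f ∈ equivariantMaps k t m n ↔ ∀ (σ : Equiv.Perm (Fin t)) (J : Fin m → Fin t)
      (I : Fin n → Fin t), LinearMap.toMatrix' f (fun p => σ (J p)) (fun p => σ (I p)) =
        LinearMap.toMatrix' f J I := by
  simp only [LinearMap.toMatrix'_apply]
  constructor
  · intro hf σ J I
    have h := congrFun (hf σ (Pi.single I 1)) (fun p => σ (J p))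
    rw [diagAct_single, diagAct_apply] at h
    simpa using h
  · intro hf σ
    refine LinearMap.congr_fun (f := f ∘ₗ diagAct k t n σ) (g := diagAct k t m σ ∘ₗ f) ?_
    refine LinearMap.pi_ext' fun I => LinearMap.ext_ring ?_
    ext J
    have h := hf σ (fun p => σ.symm (J p)) I
    simp only [Equiv.apply_symm_apply] at h
    simpa [diagAct_single, diagAct_apply] using h

/-- Functions with the same kernel are related by a permutation of the codomain: the bijection
between their ranges extends, the codomain being finite. -/
lemma exists_perm_comp_eq {α : Type*} {t : ℕ} (x y : α → Fin t)
    (h : Setoid.ker x = Setoid.ker y) : ∃ σ : Equiv.Perm (Fin t), ∀ a, σ (x a) = y a := by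
  let e : {b // b ∈ Set.range x} ≃ {b // b ∈ Set.range y} :=
    (Setoid.quotientKerEquivRange x).symm.trans
      ((Quotient.congrRight fun a b => by
        rw [h]).trans (Setoid.quotientKerEquivRange y))
  refine ⟨e.extendSubtype, fun a => ?_⟩
  rw [Equiv.extendSubtype_apply_of_mem e (x a) ⟨a, rfl⟩]
  have hx : (Setoid.quotientKerEquivRange x).symm ⟨x a, a, rfl⟩ = Quotient.mk _ a := by
    rw [Equiv.symm_apply_eq]
    rfl
  simp only [e, Equiv.trans_apply, hx]
  rfl

lemma exists_ker_eq {N t : ℕ} (h : N ≤ t) (s : Setoid (Fin N)) :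
    ∃ x : Fin N → Fin t, Setoid.ker x = s := by
  refine ⟨fun a => Fin.castLE h (Quotient.out (Quotient.mk s a)), ?_⟩
  ext a b
  rw [Setoid.ker_def, (Fin.castLE_injective h).eq_iff, Quotient.out_inj, Quotient.eq]

/-- An index function `Fin (m + n) → Fin t` with prescribed kernel. -/
def kerRep {N t : ℕ} (h : N ≤ t) (s : Setoid (Fin N)) : Fin N → Fin t :=
  (exists_ker_eq h s).choose

lemma ker_kerRep {N t : ℕ} (h : N ≤ t) (s : Setoid (Fin N)) : Setoid.ker (kerRep h s) = s :=
  (exists_ker_eq h s).choose_spec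

lemma ker_append_perm {t m n : ℕ} (σ : Equiv.Perm (Fin t)) (J : Fin m → Fin t)
    (I : Fin n → Fin t) :
    Setoid.ker (Fin.append (fun p => σ (J p)) (fun p => σ (I p))) =
      Setoid.ker (Fin.append J I) := by
  have h : Fin.append (fun p => σ (J p)) (fun p => σ (I p)) = σ ∘ Fin.append J I := by
    ext a
    refine Fin.addCases (fun i => ?_) (fun i => ?_) a <;> simp
  rw [h]
  ext a b
  simp [Setoid.ker_def]

/-- Equivariant maps correspond to functions on equivalence relations: a function `g` gives the map
whose matrix entry at `(J, I)` is `g` of the kernel of `J` and `I` glued together, and `g` is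
recovered by evaluating matrix entries at orbit representatives. -/
def equivariantEquiv (k : Type*) [Field k] (t m n : ℕ) (h : m + n ≤ t) :
    (Setoid (Fin (m + n)) → k) ≃ₗ[k] equivariantMaps k t m n where
  toFun g := ⟨Matrix.toLin' (Matrix.of fun J I => g (Setoid.ker (Fin.append J I))), by
    rw [equivariant_iff]
    intro σ J I
    simp only [LinearMap.toMatrix'_toLin', Matrix.of_apply, ker_append_perm]⟩
  map_add' g g' := by
    ext1
    apply LinearMap.toMatrix'.injective
    ext J I
    simp
  map_smul' c g := by
    ext1
    apply LinearMap.toMatrix'.injective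
    ext J I
    simp
  invFun f s := LinearMap.toMatrix' f.1 (fun i => kerRep h s (Fin.castAdd n i))
    (fun i => kerRep h s (Fin.natAdd m i))
  left_inv g := by
    ext s
    simp only [LinearMap.toMatrix'_toLin', Matrix.of_apply, Fin.append_castAdd_natAdd, ker_kerRep]
  right_inv f := by
    ext1
    apply LinearMap.toMatrix'.injective
    ext J I
    simp only [LinearMap.toMatrix'_toLin', Matrix.of_apply]
    obtain ⟨σ, hσ⟩ := exists_perm_comp_eq
      (kerRep h (Setoid.ker (Fin.append J I))) (Fin.append J I) (ker_kerRep h _)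
    rw [← (equivariant_iff k t m n f.1).1 f.2 σ]
    simp only [hσ, Fin.append_left, Fin.append_right]

/-- If `t ≥ m + n`, the dimension of the space of `S_t`-equivariant `k`-linear maps
`U_t^{⊗n} → U_t^{⊗m}` equals the number of set partitions (equivalence relations) of a set
with `m + n` elements, i.e. the `(m+n)`-th Bell number. -/
theorem stmt4 (k : Type*) [Field k] [CharZero k] (t m n : ℕ) (h : m + n ≤ t) :
    Module.finrank k (equivariantMaps k t m n) = Nat.card (Setoid (Fin (m + n))) := by
  have : Finite (Setoid (Fin (m + n))) :=
    Finite.of_injective (fun s : Setoid (Fin (m + n)) => s.r) fun s s' hs =>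
      Setoid.ext fun a b => iff_of_eq (congrFun (congrFun hs a) b)
  have := Fintype.ofFinite (Setoid (Fin (m + n)))
  rw [← (equivariantEquiv k t m n h).finrank_eq, Module.finrank_fintype_fun_eq_card,
    Nat.card_eq_fintype_card]
end
end

section
/- For every integer r ≥ 1, define the operator Z_n^{(r)} := Σ_{j=1}^{n} ((X_j^L)^r − (X_j^R)^r) on U_t^{⊗n}, and Z_m^{(r)} similarly on U_t^{⊗m}. Then for every set partition π of Fin m ⊕ Fin n, the partition operator T_π : U_t^{⊗n} → U_t^{⊗m} satisfies T_π ∘ Z_n^{(r)} = Z_m^{(r)} ∘ T_π. (Operator realization of the paper's central elements z^{(r)} = (z_n^{(r)})_{n≥0} of the partition category: z^{(r)} ∈ Z(Par_t).) -/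
/-!
Every partition operator `T_π` is `S_t`-equivariant, so it is enough to show that `Z_n^{(r)}` is
the action on `U_t^{⊗n}` of an element `ζ - ε(ζ)` of the group algebra `k[S_t]`, with `ζ`
independent of `n` and `ε` the augmentation.

Put `J_i = ∑_a (a i) ∈ k[S_t]`. On the basis vector `u_I`, the operator `(X_p^L)^r` acts as
`J_i^r` with `i = I_p` on the positions `≤ p`, and `(X_p^R)^r` acts as `J_i^r` on the positions
`< p` (`jmL_pow_basisVec`, `jmR_pow_basisVec`). A permutation fixing `i` contributes equally to
both, so the difference only involves the coefficients of `J_i^r` at permutations `g` with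
`g i ≠ i`. The key fact (`coeff_starSum_pow_eq`) is that such a coefficient does not depend on
the choice of `i` among the points moved by `g`; taking these common values as the coefficients of
`ζ`, the sum over `p` telescopes to the action of `ζ` on all positions minus its action on none.

For the key fact let `s = (i j)`. The elements `J_i` and `J_j - s` commute, since the second is a
combination of permutations fixing `i`; likewise `J_j` and `J_i - s`. The two commuting pairs
`(J_i, J_j - s)` and `(J_j, J_i - s)` have the same sum and the same product, hence the same power
sums: `J_i^r + (J_j - s)^r = J_j^r + (J_i - s)^r`. At a permutation moving both `i` and `j` the
coefficients of `(J_j - s)^r` and `(J_i - s)^r` vanish.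
-/

open scoped Classical

noncomputable section

/-- The partition operator `T_π : U_t^{⊗n} → U_t^{⊗m}` attached to a set partition `π` of
`Fin m ⊕ Fin n` (encoded as an equivalence relation, i.e. a `Setoid`). -/
def partitionMap (k : Type*) [Field k] (t m n : ℕ) (π : Setoid (Fin m ⊕ Fin n)) :
    ((Fin n → Fin t) → k) →ₗ[k] ((Fin m → Fin t) → k) :=
  Matrix.mulVecLin (Matrix.of fun (J : Fin m → Fin t) (I : Fin n → Fin t) =>
    if ∀ x y : Fin m ⊕ Fin n, π.r x y → Sum.elim J I x = Sum.elim J I y then (1 : k) else 0)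

/-- The Jucys–Murphy operator `X_j^L` on `U_t^{⊗n}`, where the tensor factors are indexed by
positions `p : Fin n` (position `p` is the string numbered `j = p + 1`). -/
def jmL (k : Type*) [Field k] (t n : ℕ) (p : Fin n) :
    ((Fin n → Fin t) → k) →ₗ[k] ((Fin n → Fin t) → k) :=
  ∑ a : Fin t, Matrix.mulVecLin (Matrix.of fun (J I : Fin n → Fin t) =>
    if (fun q => if q ≤ p then Equiv.swap a (I p) (I q) else I q) = J then (1 : k) else 0)

/-- The Jucys–Murphy operator `X_j^R` on `U_t^{⊗n}`. -/
def jmR (k : Type*) [Field k] (t n : ℕ) (p : Fin n) :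
    ((Fin n → Fin t) → k) →ₗ[k] ((Fin n → Fin t) → k) :=
  ∑ a : Fin t, Matrix.mulVecLin (Matrix.of fun (J I : Fin n → Fin t) =>
    if (fun q => if q < p then Equiv.swap a (I p) (I q) else I q) = J then (1 : k) else 0)

/-- `Z_n^{(r)} = ∑_{j=1}^n ((X_j^L)^r − (X_j^R)^r)` on `U_t^{⊗n}`. -/
def zOp (k : Type*) [Field k] (t n r : ℕ) :
    ((Fin n → Fin t) → k) →ₗ[k] ((Fin n → Fin t) → k) :=
  ∑ p : Fin n, ((jmL k t n p) ^ r - (jmR k t n p) ^ r)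

/-! ### Star sums in the group algebra -/

/-- Newton's recursion for power sums, applied to two commuting pairs with the same elementary
symmetric functions. -/
theorem pow_add_pow_eq_of_commute {R : Type*} [Ring R] {x b y a : R} (hxb : Commute x b)
    (hya : Commute y a) (hs : x + b = y + a) (hp : x * b = y * a) (r : ℕ) :
    x ^ r + b ^ r = y ^ r + a ^ r := by
  have newton : ∀ {u v : R}, Commute u v → ∀ r : ℕ,
      u ^ (r + 2) + v ^ (r + 2) = (u + v) * (u ^ (r + 1) + v ^ (r + 1))
        - u * v * (u ^ r + v ^ r) := by
    intro u v h r
    have h1 : u * v * u ^ r = v * u ^ (r + 1) := by rw [h.eq, mul_assoc, ← pow_succ']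
    have h2 : u * v * v ^ r = u * v ^ (r + 1) := by rw [mul_assoc, ← pow_succ']
    rw [mul_add (u * v), h1, h2, pow_succ' u (r + 1), pow_succ' v (r + 1)]
    noncomm_ring
  induction r using Nat.twoStepInduction with
  | zero => simp
  | one => simpa using hs
  | more r ih1 ih2 => rw [newton hxb, newton hya, ih1, ih2, hs, hp]

/-- The star sum `J_i = ∑_a (a i)` in the group algebra of `S_t`; the term `a = i` is the
identity. -/
def starSum (k : Type*) [Field k] (t : ℕ) (i : Fin t) : MonoidAlgebra k (Equiv.Perm (Fin t)) :=
  ∑ a : Fin t, MonoidAlgebra.single (Equiv.swap a i) 1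

/-- The elements of the group algebra supported on the stabilizer of `i`. -/
def IsSuppFix {k : Type*} [Field k] {t : ℕ} (i : Fin t)
    (x : MonoidAlgebra k (Equiv.Perm (Fin t))) : Prop :=
  ∀ g : Equiv.Perm (Fin t), g i ≠ i → x.coeff g = 0

theorem single_mul_starSum {k : Type*} [Field k] {t : ℕ} (g : Equiv.Perm (Fin t)) (i : Fin t) :
    MonoidAlgebra.single g 1 * starSum k t i = starSum k t (g i) * MonoidAlgebra.single g 1 := by
  simp only [starSum, Finset.mul_sum, Finset.sum_mul, MonoidAlgebra.single_mul_single, mul_one]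
  refine Fintype.sum_equiv g _ _ fun a => ?_
  rw [Equiv.mul_swap_eq_swap_mul]

/-- Removing the transposition `(i j)` from `J_j`. -/
theorem starSum_sub_swap {k : Type*} [Field k] {t : ℕ} (i j : Fin t) :
    starSum k t j - MonoidAlgebra.single (Equiv.swap i j) 1 =
      ∑ a ∈ Finset.univ.erase i, MonoidAlgebra.single (Equiv.swap a j) 1 := by
  rw [starSum, ← Finset.add_sum_erase _ _ (Finset.mem_univ i), add_sub_cancel_left]

theorem starSum_commute {k : Type*} [Field k] {t : ℕ} {i j : Fin t} (hij : i ≠ j) :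
    Commute (starSum k t i) (starSum k t j - MonoidAlgebra.single (Equiv.swap i j) 1) := by
  rw [starSum_sub_swap]
  refine Commute.sum_right _ _ _ fun a ha => ?_
  have h := single_mul_starSum (k := k) (Equiv.swap a j) i
  rw [Equiv.swap_apply_of_ne_of_ne (Finset.ne_of_mem_erase ha).symm hij] at h
  exact h.symm

theorem isSuppFix_pow {k : Type*} [Field k] {t : ℕ} {i j : Fin t} (hij : i ≠ j) (r : ℕ) :
    IsSuppFix i ((starSum k t j - MonoidAlgebra.single (Equiv.swap i j) 1) ^ r) := by
  induction r with
  | zero =>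
    intro g hg
    rw [pow_zero, MonoidAlgebra.one_def, MonoidAlgebra.coeff_single, Finsupp.single_apply, if_neg]
    rintro rfl
    exact hg rfl
  | succ r ih =>
    intro g hg
    rw [pow_succ]
    nth_rewrite 2 [starSum_sub_swap]
    rw [Finset.mul_sum, MonoidAlgebra.coeff_sum, Finsupp.finsetSum_apply]
    refine Finset.sum_eq_zero fun a ha => ?_
    rw [MonoidAlgebra.coeff_mul_single_apply, mul_one]
    apply ih
    rwa [Equiv.swap_inv, Equiv.Perm.mul_apply,
      Equiv.swap_apply_of_ne_of_ne (Finset.ne_of_mem_erase ha).symm hij]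

/-- The power-sum identity `J_i^r + (J_j - s)^r = J_j^r + (J_i - s)^r` with `s = (i j)`. -/
theorem starSum_pow_add {k : Type*} [Field k] {t : ℕ} {i j : Fin t} (hij : i ≠ j) (r : ℕ) :
    starSum k t i ^ r + (starSum k t j - MonoidAlgebra.single (Equiv.swap i j) 1) ^ r =
      starSum k t j ^ r + (starSum k t i - MonoidAlgebra.single (Equiv.swap j i) 1) ^ r := by
  refine pow_add_pow_eq_of_commute (starSum_commute hij) (starSum_commute hij.symm) ?_ ?_ r
  · rw [Equiv.swap_comm j i]
    abel
  · have h := single_mul_starSum (k := k) (Equiv.swap i j) i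
    rw [Equiv.swap_apply_left] at h
    rw [(starSum_commute hij).eq, sub_mul, h, mul_sub, Equiv.swap_comm j i]

/-- The coefficient of `J_i^r` at `g` is the same for all points `i` moved by `g`. -/
theorem coeff_starSum_pow_eq {k : Type*} [Field k] {t : ℕ} (r : ℕ) (g : Equiv.Perm (Fin t))
    {i j : Fin t} (hi : g i ≠ i) (hj : g j ≠ j) :
    (starSum k t i ^ r).coeff g = (starSum k t j ^ r).coeff g := by
  by_cases hij : i = j
  · rw [hij]
  have h := congrArg (fun x => x.coeff g) (starSum_pow_add (k := k) hij r)
  simpa [isSuppFix_pow (k := k) hij r g hi, isSuppFix_pow (k := k) (Ne.symm hij) r g hj] using h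

/-- The group algebra element `ζ` whose coefficient at `g ≠ 1` is the coefficient of `J_i^r` at `g`
for a point `i` moved by `g`; the coefficient at `1` plays no role and is set to `0`. -/
def zetaElt (k : Type*) [Field k] (t r : ℕ) : MonoidAlgebra k (Equiv.Perm (Fin t)) :=
  MonoidAlgebra.ofCoeff <| Finsupp.equivFunOnFinite.symm fun g =>
    if h : ∃ i, g i ≠ i then (starSum k t h.choose ^ r).coeff g else 0

theorem coeff_zetaElt {k : Type*} [Field k] {t : ℕ} (r : ℕ) (g : Equiv.Perm (Fin t))
    {i : Fin t} (hi : g i ≠ i) : (zetaElt k t r).coeff g = (starSum k t i ^ r).coeff g := by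
  have h : ∃ i, g i ≠ i := ⟨i, hi⟩
  simp only [zetaElt, Finsupp.equivFunOnFinite_symm_apply_apply, dif_pos h]
  exact coeff_starSum_pow_eq r g h.choose_spec hi

/-! ### Action on the first tensor factors -/

/-- The permutation `g` applied to the first `c` letters of the word `I`. -/
def cutAct {t n : ℕ} (c : ℕ) (g : Equiv.Perm (Fin t)) (I : Fin n → Fin t) : Fin n → Fin t :=
  fun q => if q.val < c then g (I q) else I q

theorem cutAct_mul {t n : ℕ} (c : ℕ) (g h : Equiv.Perm (Fin t)) (I : Fin n → Fin t) :
    cutAct c (g * h) I = cutAct c g (cutAct c h I) := by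
  funext q
  simp only [cutAct]
  split_ifs <;> rfl

theorem cutAct_one {t n : ℕ} (c : ℕ) (I : Fin n → Fin t) : cutAct c 1 I = I := by
  funext q
  simp [cutAct]

/-- The basis vector `u_I` of `U_t^{⊗n}`. -/
def basisVec (k : Type*) [Field k] {t n : ℕ} (I : Fin n → Fin t) : (Fin n → Fin t) → k :=
  Pi.single I 1

/-- The action of the group algebra of `S_t` on the first `c` tensor factors of `U_t^{⊗n}`. In
terms of coordinates, `g` acts by precomposition with the action of `g⁻¹` on words. -/
def cutRep (k : Type*) [Field k] (t n c : ℕ) :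
    MonoidAlgebra k (Equiv.Perm (Fin t)) →ₐ[k] Module.End k ((Fin n → Fin t) → k) :=
  MonoidAlgebra.lift k _ _
    { toFun := fun g => LinearMap.funLeft k k (cutAct c g⁻¹)
      map_one' := by
        ext f J
        simp [cutAct_one]
      map_mul' := fun g h => by
        refine LinearMap.ext fun f => funext fun J => ?_
        simp [LinearMap.funLeft_apply, cutAct_mul] }

theorem cutRep_single_apply {k : Type*} [Field k] {t n : ℕ} (c : ℕ) (g : Equiv.Perm (Fin t))
    (f : (Fin n → Fin t) → k) (J : Fin n → Fin t) :
    cutRep k t n c (MonoidAlgebra.single g 1) f J = f (cutAct c g⁻¹ J) := by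
  simp [cutRep, LinearMap.funLeft_apply]

theorem cutRep_single_basisVec {k : Type*} [Field k] {t n : ℕ} (c : ℕ) (g : Equiv.Perm (Fin t))
    (I : Fin n → Fin t) :
    cutRep k t n c (MonoidAlgebra.single g 1) (basisVec k I) = basisVec k (cutAct c g I) := by
  funext J
  rw [cutRep_single_apply]
  simp only [basisVec, Pi.single_apply]
  congr 1
  refine propext ⟨fun h => ?_, fun h => ?_⟩
  · rw [← h, ← cutAct_mul, mul_inv_cancel, cutAct_one]
  · rw [h, ← cutAct_mul, inv_mul_cancel, cutAct_one]

theorem single_eq_smul {k : Type*} [Field k] {t : ℕ} (g : Equiv.Perm (Fin t)) (c : k) :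
    (MonoidAlgebra.single g c : MonoidAlgebra k (Equiv.Perm (Fin t))) =
      c • MonoidAlgebra.single g 1 := by
  simp

theorem cutRep_basisVec {k : Type*} [Field k] {t n : ℕ} (c : ℕ)
    (x : MonoidAlgebra k (Equiv.Perm (Fin t))) (I : Fin n → Fin t) :
    cutRep k t n c x (basisVec k I) = ∑ g, x.coeff g • basisVec k (cutAct c g I) := by
  induction x using MonoidAlgebra.induction_linear with
  | zero => simp
  | add x y hx hy => simp [hx, hy, add_smul, Finset.sum_add_distrib]
  | single g a =>
    rw [single_eq_smul, map_smul, LinearMap.smul_apply, cutRep_single_basisVec]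
    simp [Finsupp.single_apply, ite_smul]

/-! ### Powers of the Jucys–Murphy operators -/

theorem mulVecLin_graph_basisVec {k : Type*} [Field k] {t n : ℕ}
    (φ : (Fin n → Fin t) → (Fin n → Fin t)) (I : Fin n → Fin t) :
    Matrix.mulVecLin (Matrix.of fun J I : Fin n → Fin t => if φ I = J then (1 : k) else 0)
      (basisVec k I) = basisVec k (φ I) := by
  funext J
  simp [basisVec, Pi.single_apply, eq_comm]

theorem jmL_basisVec {k : Type*} [Field k] {t n : ℕ} (p : Fin n) (I : Fin n → Fin t) :
    jmL k t n p (basisVec k I) =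
      cutRep k t n (p.val + 1) (starSum k t (I p)) (basisVec k I) := by
  simp only [jmL, starSum, map_sum, LinearMap.sum_apply, cutRep_single_basisVec]
  refine Finset.sum_congr rfl fun a _ => ?_
  rw [mulVecLin_graph_basisVec (fun I q => if q ≤ p then Equiv.swap a (I p) (I q) else I q)]
  congr 1
  funext q
  simp [cutAct]

theorem jmR_basisVec {k : Type*} [Field k] {t n : ℕ} (p : Fin n) (I : Fin n → Fin t) :
    jmR k t n p (basisVec k I) = cutRep k t n p.val (starSum k t (I p)) (basisVec k I) := by
  simp only [jmR, starSum, map_sum, LinearMap.sum_apply, cutRep_single_basisVec]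
  refine Finset.sum_congr rfl fun a _ => ?_
  rw [mulVecLin_graph_basisVec (fun I q => if q < p then Equiv.swap a (I p) (I q) else I q)]
  rfl

/-- `X_p^L` acts on the span of the vectors `g u_I` (with `g` on the positions `≤ p`) as right
multiplication by `J_{I_p}`, because `J_{g i} g = g J_i`. -/
theorem jmL_cutRep_basisVec {k : Type*} [Field k] {t n : ℕ} (p : Fin n) (I : Fin n → Fin t)
    (x : MonoidAlgebra k (Equiv.Perm (Fin t))) :
    jmL k t n p (cutRep k t n (p.val + 1) x (basisVec k I)) =
      cutRep k t n (p.val + 1) (x * starSum k t (I p)) (basisVec k I) := by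
  induction x using MonoidAlgebra.induction_linear with
  | zero => simp
  | add x y hx hy => simp only [map_add, add_mul, LinearMap.add_apply, hx, hy]
  | single g a =>
    have hg : cutAct (p.val + 1) g I p = g (I p) := by simp [cutAct]
    rw [single_eq_smul, smul_mul_assoc, map_smul, map_smul, LinearMap.smul_apply,
      LinearMap.smul_apply, map_smul, cutRep_single_basisVec, jmL_basisVec, hg,
      ← cutRep_single_basisVec, ← Module.End.mul_apply, ← map_mul, single_mul_starSum]

/-- `X_p^R` acts on the span of the vectors `g u_I` (with `g` on the positions `< p`) as left
multiplication by `J_{I_p}`, because the letter at position `p` is unchanged. -/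
theorem jmR_cutRep_basisVec {k : Type*} [Field k] {t n : ℕ} (p : Fin n) (I : Fin n → Fin t)
    (x : MonoidAlgebra k (Equiv.Perm (Fin t))) :
    jmR k t n p (cutRep k t n p.val x (basisVec k I)) =
      cutRep k t n p.val (starSum k t (I p) * x) (basisVec k I) := by
  induction x using MonoidAlgebra.induction_linear with
  | zero => simp
  | add x y hx hy => simp only [map_add, mul_add, LinearMap.add_apply, hx, hy]
  | single g a =>
    have hg : cutAct p.val g I p = I p := by simp [cutAct]
    rw [single_eq_smul, mul_smul_comm, map_smul, map_smul, LinearMap.smul_apply,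
      LinearMap.smul_apply, map_smul, cutRep_single_basisVec, jmR_basisVec, hg,
      ← cutRep_single_basisVec, ← Module.End.mul_apply, ← map_mul]

theorem jmL_pow_basisVec {k : Type*} [Field k] {t n : ℕ} (p : Fin n) (I : Fin n → Fin t)
    (r : ℕ) : (jmL k t n p ^ r) (basisVec k I) =
      cutRep k t n (p.val + 1) (starSum k t (I p) ^ r) (basisVec k I) := by
  induction r with
  | zero => simp
  | succ r ih => rw [pow_succ', Module.End.mul_apply, ih, jmL_cutRep_basisVec, ← pow_succ]

theorem jmR_pow_basisVec {k : Type*} [Field k] {t n : ℕ} (p : Fin n) (I : Fin n → Fin t)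
    (r : ℕ) : (jmR k t n p ^ r) (basisVec k I) =
      cutRep k t n p.val (starSum k t (I p) ^ r) (basisVec k I) := by
  induction r with
  | zero => simp
  | succ r ih => rw [pow_succ', Module.End.mul_apply, ih, jmR_cutRep_basisVec, ← pow_succ']

/-- If `g` fixes the letter at position `p`, cutting before or after `p` makes no difference. -/
theorem cutAct_succ_of_fix {t n : ℕ} (p : Fin n) (g : Equiv.Perm (Fin t)) (I : Fin n → Fin t)
    (h : g (I p) = I p) : cutAct (p.val + 1) g I = cutAct p.val g I := by
  funext q
  simp only [cutAct]
  by_cases hq : q = p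
  · subst hq
    simp [h]
  · have : q.val ≠ p.val := fun h => hq (Fin.ext h)
    have h2 : q.val < p.val + 1 ↔ q.val < p.val := by omega
    simp only [h2]

theorem linearMap_ext_basisVec {k : Type*} [Field k] {t n : ℕ} {M : Type*} [AddCommGroup M]
    [Module k M] {A B : ((Fin n → Fin t) → k) →ₗ[k] M}
    (h : ∀ I, A (basisVec k I) = B (basisVec k I)) : A = B :=
  (Pi.basisFun k (Fin n → Fin t)).ext fun I => by
    rw [Pi.basisFun_apply]
    exact h I

/-- `(X_p^L)^r - (X_p^R)^r` is the difference of the actions of `ζ` on the positions `≤ p` and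
on the positions `< p`. -/
theorem jm_pow_sub {k : Type*} [Field k] {t n : ℕ} (p : Fin n) (r : ℕ) :
    jmL k t n p ^ r - jmR k t n p ^ r =
      cutRep k t n (p.val + 1) (zetaElt k t r) - cutRep k t n p.val (zetaElt k t r) := by
  refine linearMap_ext_basisVec fun I => ?_
  rw [LinearMap.sub_apply, LinearMap.sub_apply, jmL_pow_basisVec, jmR_pow_basisVec]
  simp only [cutRep_basisVec, ← Finset.sum_sub_distrib, ← smul_sub]
  refine Finset.sum_congr rfl fun g _ => ?_
  by_cases h : g (I p) = I p
  · rw [cutAct_succ_of_fix p g I h, sub_self, smul_zero, smul_zero]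
  · rw [coeff_zetaElt r g h]

/-- The differences in `jm_pow_sub` telescope over `p`. -/
theorem zOp_eq {k : Type*} [Field k] {t n : ℕ} (r : ℕ) :
    zOp k t n r = cutRep k t n n (zetaElt k t r) - cutRep k t n 0 (zetaElt k t r) := by
  simp only [zOp, jm_pow_sub]
  rw [Fin.sum_univ_eq_sum_range
    (fun c => cutRep k t n (c + 1) (zetaElt k t r) - cutRep k t n c (zetaElt k t r)),
    Finset.sum_range_sub (fun c => cutRep k t n c (zetaElt k t r))]

/-! ### Equivariance of partition operators -/

/-- The bijection of words given by letterwise application of `g`. -/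
def wordEquiv {t : ℕ} (n : ℕ) (g : Equiv.Perm (Fin t)) : (Fin n → Fin t) ≃ (Fin n → Fin t) :=
  Equiv.arrowCongr (Equiv.refl _) g

theorem cutAct_full {t n : ℕ} (g : Equiv.Perm (Fin t)) (I : Fin n → Fin t) :
    cutAct n g I = wordEquiv n g I := by
  funext q
  simp [cutAct, wordEquiv]

/-- `T_π` is `S_t`-equivariant. -/
theorem partitionMap_cutRep_full {k : Type*} [Field k] {t m n : ℕ} (π : Setoid (Fin m ⊕ Fin n))
    (x : MonoidAlgebra k (Equiv.Perm (Fin t))) :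
    (partitionMap k t m n π).comp (cutRep k t n n x) =
      (cutRep k t m m x).comp (partitionMap k t m n π) := by
  induction x using MonoidAlgebra.induction_linear with
  | zero => simp
  | add x y hx hy => rw [map_add, map_add, LinearMap.comp_add, LinearMap.add_comp, hx, hy]
  | single g a =>
    rw [single_eq_smul, map_smul, map_smul, LinearMap.comp_smul, LinearMap.smul_comp]
    congr 1
    refine LinearMap.ext fun f => funext fun J => ?_
    rw [LinearMap.comp_apply, LinearMap.comp_apply, cutRep_single_apply]
    simp only [partitionMap, Matrix.mulVecLin_apply, Matrix.mulVec, dotProduct, Matrix.of_apply]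
    refine Fintype.sum_equiv (wordEquiv n g⁻¹) _ _ fun I => ?_
    rw [cutRep_single_apply, cutAct_full, cutAct_full]
    congr 1
    have h : Sum.elim (wordEquiv m g⁻¹ J) (wordEquiv n g⁻¹ I) =
        fun x => g⁻¹ (Sum.elim J I x) := by
      funext x
      rcases x with x | x <;> rfl
    simp only [h, EmbeddingLike.apply_eq_iff_eq]

/-- On the empty set of positions the group acts trivially, so every map intertwines. -/
theorem comp_cutRep_zero {k : Type*} [Field k] {t m n : ℕ}
    (T : ((Fin n → Fin t) → k) →ₗ[k] ((Fin m → Fin t) → k))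
    (x : MonoidAlgebra k (Equiv.Perm (Fin t))) :
    T.comp (cutRep k t n 0 x) = (cutRep k t m 0 x).comp T := by
  have triv : ∀ (l : ℕ) (g : Equiv.Perm (Fin t)),
      cutRep k t l 0 (MonoidAlgebra.single g 1) = LinearMap.id := by
    intro l g
    refine LinearMap.ext fun f => funext fun J => ?_
    rw [cutRep_single_apply, LinearMap.id_apply]
    congr 1
  induction x using MonoidAlgebra.induction_linear with
  | zero => simp
  | add x y hx hy => rw [map_add, map_add, LinearMap.comp_add, LinearMap.add_comp, hx, hy]
  | single g a =>
    rw [single_eq_smul, map_smul, map_smul, LinearMap.comp_smul, LinearMap.smul_comp, triv, triv,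
      LinearMap.comp_id, LinearMap.id_comp]

/-- For every `r ≥ 1` and every set partition `π` of `Fin m ⊕ Fin n`,
`T_π ∘ Z_n^{(r)} = Z_m^{(r)} ∘ T_π`: the elements `z^{(r)}` are central in the partition
category. -/
theorem stmt8 (k : Type*) [Field k] [CharZero k] (t m n r : ℕ) (hr : 1 ≤ r)
    (π : Setoid (Fin m ⊕ Fin n)) :
    (partitionMap k t m n π).comp (zOp k t n r) = (zOp k t m r).comp (partitionMap k t m n π) := by
  rw [zOp_eq, zOp_eq, LinearMap.comp_sub, LinearMap.sub_comp, partitionMap_cutRep_full,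
    comp_cutRep_zero]
end
end
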